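/- Assume Hypothesis (H). For B ∈ B set C(B) = {Δ ∈ C : B ∩ Δ ≠ ∅}. Then |C(B)| = k/ℓ for every block B, and for every pair of distinct classes Δ, Δ' ∈ C, the number of blocks B ∈ B with Δ ∈ C(B) and Δ' ∈ C(B) equals c²λ/ℓ²; that is, the quotient incidence structure D(C) on C, with blocks the sets C(B) for B ∈ B counted with multiplicity, is a 2-(d, k/ℓ, c²λ/ℓ²) design. -/

import Mathlib

/-- A finset is partitioned by its intersections with the classes of a partition. -/
theorem card_eq_sum_card_inter_classes {Ω : Type*} [DecidableEq Ω] (𝓒 : Finset (Finset Ω))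
    (hpart : ∀ ω : Ω, ∃! Δ, Δ ∈ 𝓒 ∧ ω ∈ Δ) (B : Finset Ω) :
    B.card = ∑ Δ ∈ 𝓒, (B ∩ Δ).card := by
  have hdouble := Finset.sum_card_bipartiteAbove_eq_sum_card_bipartiteBelow
    (s := B) (t := 𝓒) (fun (ω : Ω) (Δ : Finset Ω) => ω ∈ Δ)
  have hone : ∀ ω ∈ B,
      (Finset.bipartiteAbove (fun (ω : Ω) (Δ : Finset Ω) => ω ∈ Δ) 𝓒 ω).card = 1 := by
    intro ω _
    obtain ⟨Δ, hΔ, huniq⟩ := hpart ω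
    refine Finset.card_eq_one.mpr ⟨Δ, ?_⟩
    ext Δ'
    simp only [Finset.bipartiteAbove, Finset.mem_filter, Finset.mem_singleton]
    exact ⟨huniq Δ', fun h => h ▸ hΔ⟩
  rw [Finset.sum_congr rfl hone, Finset.sum_const, smul_eq_mul, mul_one] at hdouble
  simpa only [Finset.bipartiteBelow, Finset.filter_mem_eq_inter] using hdouble

/-- Counting triples `(α, β, B)` with `α ∈ Δ ∩ B` and `β ∈ Δ' ∩ B` in two ways. -/
theorem sum_card_inter_mul_card_inter {Ω : Type*} [DecidableEq Ω] (𝓑 : Finset (Finset Ω))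
    (Δ Δ' : Finset Ω) :
    ∑ B ∈ 𝓑, (B ∩ Δ).card * (B ∩ Δ').card =
      ∑ p ∈ Δ ×ˢ Δ', (𝓑.filter (fun B => p.1 ∈ B ∧ p.2 ∈ B)).card := by
  have hdouble := Finset.sum_card_bipartiteAbove_eq_sum_card_bipartiteBelow
    (s := Δ ×ˢ Δ') (t := 𝓑) (fun (p : Ω × Ω) (B : Finset Ω) => p.1 ∈ B ∧ p.2 ∈ B)
  refine Eq.trans (Finset.sum_congr rfl fun B _ => ?_) hdouble.symm
  rw [← Finset.card_product]
  congr 1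
  ext p
  simp only [Finset.bipartiteBelow, Finset.mem_filter, Finset.mem_product, Finset.mem_inter]
  tauto

theorem stmt_15
    {Ω : Type*} [Fintype Ω] [DecidableEq Ω]
    (v k lam c d ℓ : ℕ)
    (𝓑 𝓒 : Finset (Finset Ω))
    (G : Subgroup (Equiv.Perm Ω))
    (hv : Fintype.card Ω = v)
    (hlam1 : 1 ≤ lam)
    (hkcard : ∀ B ∈ 𝓑, B.card = k)
    (hpairs : ∀ α β : Ω, α ≠ β → (𝓑.filter (fun B => α ∈ B ∧ β ∈ B)).card = lam)
    (hk2 : 2 < k) (hkv : k < v)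
    (hGB : ∀ g ∈ G, ∀ B ∈ 𝓑, B.image ⇑g ∈ 𝓑)
    (hflag : ∀ B₁ ∈ 𝓑, ∀ B₂ ∈ 𝓑, ∀ α₁ ∈ B₁, ∀ α₂ ∈ B₂,
        ∃ g ∈ G, B₁.image ⇑g = B₂ ∧ g α₁ = α₂)
    (hpart : ∀ ω : Ω, ∃! Δ, Δ ∈ 𝓒 ∧ ω ∈ Δ)
    (hdcard : 𝓒.card = d) (hd2 : 2 ≤ d)
    (hccard : ∀ Δ ∈ 𝓒, Δ.card = c) (hc2 : 2 ≤ c)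
    (hGC : ∀ g ∈ G, ∀ Δ ∈ 𝓒, Δ.image ⇑g ∈ 𝓒)
    (hl2 : 2 ≤ ℓ)
    (hlcap : ∀ B ∈ 𝓑, ∀ Δ ∈ 𝓒, (B ∩ Δ).Nonempty → (B ∩ Δ).card = ℓ)
    : -- every block meets exactly k/ℓ classes
      (∀ B ∈ 𝓑, (𝓒.filter (fun Δ => (B ∩ Δ).Nonempty)).card = k / ℓ) ∧
      -- every pair of distinct classes is incident with exactly c²λ/ℓ² blocks
      (∀ Δ ∈ 𝓒, ∀ Δ' ∈ 𝓒, Δ ≠ Δ' →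
        (𝓑.filter (fun B => (B ∩ Δ).Nonempty ∧ (B ∩ Δ').Nonempty)).card * ℓ ^ 2 = c ^ 2 * lam) := by
  constructor
  · intro B hB
    have hsum := card_eq_sum_card_inter_classes 𝓒 hpart B
    rw [hkcard B hB, ← Finset.sum_filter_of_ne (p := fun Δ => (B ∩ Δ).Nonempty)
        (fun Δ _ h => Finset.card_ne_zero.mp h),
      Finset.sum_const_nat fun Δ hΔ =>
        hlcap B hB Δ (Finset.mem_filter.mp hΔ).1 (Finset.mem_filter.mp hΔ).2] at hsum
    rw [hsum, Nat.mul_div_cancel _ (by omega)]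
  · intro Δ hΔ Δ' hΔ' hne
    have hsum := sum_card_inter_mul_card_inter 𝓑 Δ Δ'
    have hpair : ∀ p ∈ Δ ×ˢ Δ', (𝓑.filter (fun B => p.1 ∈ B ∧ p.2 ∈ B)).card = lam := by
      intro p hp
      obtain ⟨h₁, h₂⟩ := Finset.mem_product.mp hp
      refine hpairs _ _ fun h => hne ?_
      exact (hpart p.1).unique ⟨hΔ, h₁⟩ ⟨hΔ', h ▸ h₂⟩
    rw [Finset.sum_const_nat hpair, Finset.card_product, hccard Δ hΔ, hccard Δ' hΔ',
      ← Finset.sum_filter_of_ne (p := fun B => (B ∩ Δ).Nonempty ∧ (B ∩ Δ').Nonempty)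
        (fun B _ h => ⟨Finset.card_ne_zero.mp (left_ne_zero_of_mul h),
          Finset.card_ne_zero.mp (right_ne_zero_of_mul h)⟩),
      Finset.sum_const_nat (m := ℓ * ℓ) fun B hB => by
        obtain ⟨hB, h₁, h₂⟩ := Finset.mem_filter.mp hB
        rw [hlcap B hB Δ hΔ h₁, hlcap B hB Δ' hΔ' h₂]] at hsum
    rw [sq, sq, hsum]
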